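/- arXiv:2409.15485 — 3 statements merged into one kernel-verified Lean document; each statement's English description precedes it below -/
import Mathlib

section
/- Assume (Cl1), (Cl2) and (Cl3), and let ω_+ be a Borel probability measure on X which is a weak limit point as T → ∞ of the time-averaged measures ⟨ω⟩_T, where ⟨ω⟩_T(A) = (1/T) ∫_0^T ω_t(A) dt (i.e. ω_+ is a NESS: there is a sequence T_n → ∞ with ∫ f d⟨ω⟩_{T_n} → ∫ f dω_+ for all continuous f). Then ∫_X σ dω_+ ≥ 0. -/
open MeasureTheory Filter Set intervalIntegral

/-- The cocycle `c^t = log (dω_t/dω) ∘ φ^t`, where `ω_t = (φ^t)_* ω`. -/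
noncomputable def flowCocycle {X : Type*} [MeasurableSpace X]
    (φ : ℝ → X → X) (ω : Measure X) (t : ℝ) (x : X) : ℝ :=
  Real.log (((Measure.map (φ t) ω).rnDeriv ω (φ t x)).toReal)

/-!
The relative entropy `D t = KL(ω_t | ω)` equals `∫ c^t dω` after a change of variables, so the
cocycle identity `c^(t+s) = c^t ∘ φ^s + c^s` reads `D (t + s) = ∫ c^t dω_s + D s`. Differentiating
at `t = 0` gives `D' s = ∫ σ dω_s`, and since `D 0 = 0` the entropy balance
`∫_0^T ∫ σ dω_s ds = D T ≥ 0` follows: every time average of `σ` is nonnegative, and so is every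
limit point.
-/

open InformationTheory Topology
open scoped BoundedContinuousFunction

section LogLikelihoodRatio

variable {α β γ : Type*} {mα : MeasurableSpace α} {mβ : MeasurableSpace β} {mγ : MeasurableSpace γ}

lemma toReal_rnDeriv_ne_zero_ae {μ ν : Measure α} [SigmaFinite μ] [SigmaFinite ν] (hμν : μ ≪ ν) :
    ∀ᵐ x ∂μ, (μ.rnDeriv ν x).toReal ≠ 0 := by
  filter_upwards [Measure.rnDeriv_pos hμν, hμν.ae_le (Measure.rnDeriv_ne_top μ ν)]
    with x hpos hfin using ENNReal.toReal_ne_zero.2 ⟨hpos.ne', hfin⟩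

lemma llr_add_llr_ae_eq {μ ν κ : Measure α} [SigmaFinite μ] [SigmaFinite ν] [SigmaFinite κ]
    (hμν : μ ≪ ν) (hνκ : ν ≪ κ) :
    llr μ ν + llr ν κ =ᵐ[μ] llr μ κ := by
  filter_upwards [(hμν.trans hνκ).ae_le (Measure.rnDeriv_mul_rnDeriv hμν),
    toReal_rnDeriv_ne_zero_ae hμν, hμν.ae_le (toReal_rnDeriv_ne_zero_ae hνκ)]
    with x hmul hμν₀ hνκ₀
  rw [Pi.add_apply, llr, llr, llr, ← hmul, Pi.mul_apply, ENNReal.toReal_mul,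
    Real.log_mul hμν₀ hνκ₀]

lemma llr_map_ae_eq {f : α → β} (hf : MeasurableEmbedding f) (μ ν : Measure α)
    [SigmaFinite μ] [SigmaFinite ν] :
    (fun x ↦ llr (μ.map f) (ν.map f) (f x)) =ᵐ[ν] llr μ ν := by
  filter_upwards [hf.rnDeriv_map μ ν] with x hx
  rw [llr, hx, llr]

lemma llr_map_comp_ae_eq {f : β → γ} {g : α → β} {μ : Measure α} {ν : Measure β} {κ : Measure γ}
    [IsFiniteMeasure μ] [SigmaFinite ν] [SigmaFinite κ] (hf : MeasurableEmbedding f)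
    (hfν : ν.map f ≪ κ) (hg : Measure.QuasiMeasurePreserving g μ ν) :
    (fun x ↦ llr (μ.map (f ∘ g)) κ (f (g x))) =ᵐ[μ]
      fun x ↦ llr (ν.map f) κ (f (g x)) + llr (μ.map g) ν (g x) := by
  have := hf.sigmaFinite_map (μ := ν)
  have hchain := ae_of_ae_map hg.aemeasurable <| ae_of_ae_map hf.measurable.aemeasurable <|
    llr_add_llr_ae_eq (hg.absolutelyContinuous.map hf.measurable) hfν
  filter_upwards [hchain, hg.ae (llr_map_ae_eq hf (μ.map g) ν)] with x hadd hmap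
  rw [← Measure.map_map hf.measurable hg.measurable, ← hadd, Pi.add_apply, hmap, add_comm]

lemma toReal_klDiv_map_of_measure_eq {f : α → β} {μ : Measure α} {ν : Measure β}
    [IsFiniteMeasure μ] [IsFiniteMeasure ν] (hf : Measure.QuasiMeasurePreserving f μ ν)
    (hmass : μ univ = ν univ) :
    (klDiv (μ.map f) ν).toReal = ∫ x, llr (μ.map f) ν (f x) ∂μ := by
  have hmass_map : μ.map f univ = ν univ := by
    rw [Measure.map_apply hf.measurable .univ, preimage_univ, hmass]
  rw [toReal_klDiv_of_measure_eq hf.absolutelyContinuous hmass_map,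
    integral_map hf.aemeasurable (stronglyMeasurable_llr _ _).aestronglyMeasurable]

end LogLikelihoodRatio

section BoundedContinuousFunction

variable {X E : Type*} [TopologicalSpace X] [MeasurableSpace X] [OpensMeasurableSpace X]
  [NormedAddCommGroup E] [NormedSpace ℝ E] [SecondCountableTopology E]

lemma isBoundedLinearMap_integral_boundedContinuous (μ : Measure X) [IsFiniteMeasure μ] :
    IsBoundedLinearMap ℝ fun f : X →ᵇ E ↦ ∫ x, f x ∂μ := by
  borelize E
  exact IsLinearMap.with_bound
    ⟨fun f g ↦ integral_add (f.integrable μ) (g.integrable μ), fun c f ↦ integral_smul c f⟩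
    (μ.real univ) fun f ↦ f.norm_integral_le_mul_norm μ

lemma hasDerivAt_integral_of_boundedContinuous {F : ℝ → X →ᵇ E} {F' : X →ᵇ E} {t : ℝ}
    (hF : HasDerivAt F F' t) (μ : Measure X) [IsFiniteMeasure μ] :
    HasDerivAt (fun r ↦ ∫ x, F r x ∂μ) (∫ x, F' x ∂μ) t :=
  (isBoundedLinearMap_integral_boundedContinuous (E := E) μ).hasFDerivAt
    (x := F t) |>.comp_hasDerivAt t hF

end BoundedContinuousFunction

/-- A nonsingular flow: a jointly measurable action of `ℝ` whose time-`t` maps all preserve the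
measure class of `ω`. The converse `ω ≪ ω.map (φ t)` is encoded by the last field at time `-t`. -/
structure IsNonsingularFlow {X : Type*} [MeasurableSpace X] (φ : ℝ → X → X) (ω : Measure X) :
    Prop where
  measurable : Measurable fun p : ℝ × X ↦ φ p.1 p.2
  map_zero : ∀ x, φ 0 x = x
  map_add : ∀ t s x, φ (t + s) x = φ t (φ s x)
  absolutelyContinuous : ∀ t, ω.map (φ t) ≪ ω

namespace IsNonsingularFlow

variable {X : Type*} [MeasurableSpace X] {φ : ℝ → X → X} {ω : Measure X}

lemma quasiMeasurePreserving (hφ : IsNonsingularFlow φ ω) (t : ℝ) :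
    Measure.QuasiMeasurePreserving (φ t) ω ω :=
  ⟨hφ.measurable.of_uncurry_left, hφ.absolutelyContinuous t⟩

lemma measurableEmbedding (hφ : IsNonsingularFlow φ ω) (t : ℝ) : MeasurableEmbedding (φ t) :=
  let e : X ≃ᵐ X :=
    { toFun := φ t
      invFun := φ (-t)
      left_inv := fun x ↦ by rw [← hφ.map_add, neg_add_cancel, hφ.map_zero]
      right_inv := fun x ↦ by rw [← hφ.map_add, add_neg_cancel, hφ.map_zero]
      measurable_toFun := (hφ.quasiMeasurePreserving t).measurable
      measurable_invFun := (hφ.quasiMeasurePreserving (-t)).measurable }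
  e.measurableEmbedding

variable [IsFiniteMeasure ω]

lemma flowCocycle_add_ae_eq (hφ : IsNonsingularFlow φ ω) (t s : ℝ) :
    flowCocycle φ ω (t + s) =ᵐ[ω] fun x ↦ flowCocycle φ ω t (φ s x) + flowCocycle φ ω s x := by
  have hcomp : φ (t + s) = φ t ∘ φ s := funext (hφ.map_add t s)
  filter_upwards [llr_map_comp_ae_eq (hφ.measurableEmbedding t) (hφ.absolutelyContinuous t)
    (hφ.quasiMeasurePreserving s)] with x hx
  rw [flowCocycle, hcomp]
  exact hx

lemma toReal_klDiv_map_eq_integral_flowCocycle (hφ : IsNonsingularFlow φ ω) (t : ℝ) :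
    (klDiv (ω.map (φ t)) ω).toReal = ∫ x, flowCocycle φ ω t x ∂ω :=
  toReal_klDiv_map_of_measure_eq (hφ.quasiMeasurePreserving t) rfl

variable [TopologicalSpace X] [OpensMeasurableSpace X] {C : ℝ → X →ᵇ ℝ} {σ : X →ᵇ ℝ}

lemma toReal_klDiv_map_add (hφ : IsNonsingularFlow φ ω)
    (hC : ∀ t, flowCocycle φ ω t =ᵐ[ω] C t) (t s : ℝ) :
    (klDiv (ω.map (φ (t + s))) ω).toReal =
      ∫ x, C t x ∂(ω.map (φ s)) + (klDiv (ω.map (φ s)) ω).toReal := by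
  have hs := hφ.quasiMeasurePreserving s
  have hcocycle : flowCocycle φ ω (t + s) =ᵐ[ω] fun x ↦ C t (φ s x) + C s x := by
    filter_upwards [hφ.flowCocycle_add_ae_eq t s, hs.ae (hC t), hC s] with x hadd ht hs
    rw [hadd, ht, hs]
  have hC_int : Integrable (fun x ↦ C t (φ s x)) ω :=
    ((C t).integrable (ω.map (φ s))).comp_measurable hs.measurable
  rw [hφ.toReal_klDiv_map_eq_integral_flowCocycle, hφ.toReal_klDiv_map_eq_integral_flowCocycle,
    integral_congr_ae hcocycle, integral_add hC_int ((C s).integrable ω),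
    integral_congr_ae (hC s), integral_map hs.aemeasurable (C t).continuous.aestronglyMeasurable]

lemma hasDerivAt_toReal_klDiv_map (hφ : IsNonsingularFlow φ ω)
    (hC : ∀ t, flowCocycle φ ω t =ᵐ[ω] C t) (hσ : HasDerivAt C σ 0) (s : ℝ) :
    HasDerivAt (fun t ↦ (klDiv (ω.map (φ t)) ω).toReal) (∫ x, σ (φ s x) ∂ω) s := by
  have hshift (t : ℝ) : (klDiv (ω.map (φ t)) ω).toReal =
      ∫ x, C (t - s) x ∂(ω.map (φ s)) + (klDiv (ω.map (φ s)) ω).toReal := by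
    rw [← hφ.toReal_klDiv_map_add hC, sub_add_cancel]
  have hderiv : HasDerivAt (fun r ↦ ∫ x, C r x ∂(ω.map (φ s))) (∫ x, σ (φ s x) ∂ω) (s - s) := by
    rw [sub_self, ← integral_map (hφ.quasiMeasurePreserving s).aemeasurable
      σ.continuous.aestronglyMeasurable]
    exact hasDerivAt_integral_of_boundedContinuous hσ _
  rw [funext hshift]
  exact (hderiv.comp_sub_const s s).add_const _

lemma intervalIntegrable_integral_comp (hφ : IsNonsingularFlow φ ω) (f : X →ᵇ ℝ) (a b : ℝ) :
    IntervalIntegrable (fun t ↦ ∫ x, f (φ t x) ∂ω) volume a b := by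
  have hmeas : StronglyMeasurable fun t ↦ ∫ x, f (φ t x) ∂ω :=
    (f.continuous.measurable.comp hφ.measurable).stronglyMeasurable.integral_prod_right'
  refine (intervalIntegrable_const (c := ‖f‖ * ω.real univ)).mono_fun
    hmeas.aestronglyMeasurable (ae_of_all _ fun t ↦ ?_)
  exact (norm_integral_le_of_norm_le_const (ae_of_all _ fun x ↦ f.norm_coe_le_norm (φ t x))).trans
    (Real.le_norm_self _)

lemma integral_entropyProduction_eq_toReal_klDiv (hφ : IsNonsingularFlow φ ω)
    (hC : ∀ t, flowCocycle φ ω t =ᵐ[ω] C t) (hσ : HasDerivAt C σ 0) (T : ℝ) :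
    ∫ t in (0 : ℝ)..T, ∫ x, σ (φ t x) ∂ω = (klDiv (ω.map (φ T)) ω).toReal := by
  have hzero : ω.map (φ 0) = ω := by
    rw [show φ 0 = id from funext hφ.map_zero, Measure.map_id]
  rw [integral_eq_sub_of_hasDerivAt (fun s _ ↦ hφ.hasDerivAt_toReal_klDiv_map hC hσ s)
    (hφ.intervalIntegrable_integral_comp σ 0 T), hzero, klDiv_self, ENNReal.toReal_zero, sub_zero]

end IsNonsingularFlow

theorem NESS_entropy_production_nonneg_general {X : Type*} [TopologicalSpace X]
    [MeasurableSpace X] [OpensMeasurableSpace X] {φ : ℝ → X → X} {ω : Measure X}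
    [IsFiniteMeasure ω] (hφ : IsNonsingularFlow φ ω) {C : ℝ → X →ᵇ ℝ}
    (hC : ∀ t, flowCocycle φ ω t =ᵐ[ω] C t) {σ : X →ᵇ ℝ} (hσ : HasDerivAt C σ 0)
    {ωp : Measure X} {ι : Type*} {l : Filter ι} [l.NeBot] {T : ι → ℝ} (hT : ∀ᶠ i in l, 0 < T i)
    (hNESS : ∀ f : X →ᵇ ℝ,
      Tendsto (fun i ↦ (T i)⁻¹ * ∫ t in (0 : ℝ)..T i, ∫ x, f (φ t x) ∂ω) l (𝓝 (∫ x, f x ∂ωp))) :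
    0 ≤ ∫ x, σ x ∂ωp := by
  refine ge_of_tendsto (hNESS σ) (hT.mono fun i hi ↦ ?_)
  rw [hφ.integral_entropyProduction_eq_toReal_klDiv hC hσ]
  exact mul_nonneg (inv_nonneg.2 hi.le) ENNReal.toReal_nonneg

/-- Under (Cl1)–(Cl3), the expectation of the entropy production observable `σ` in any
NESS `ω₊` (a weak limit point of the time-averaged measures `⟨ω⟩_T`) is nonnegative. -/
theorem NESS_entropy_production_nonneg
    {X : Type*} [MetricSpace X] [CompactSpace X] [MeasurableSpace X] [BorelSpace X]
    (φ : ℝ → X → X)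
    (hcont : Continuous fun p : ℝ × X => φ p.1 p.2)
    (hzero : ∀ x, φ 0 x = x)
    (hgroup : ∀ t s : ℝ, ∀ x, φ (t + s) x = φ t (φ s x))
    (ω : Measure X) [IsProbabilityMeasure ω]
    (hCl1 : ∀ t : ℝ, ω ≪ Measure.map (φ t) ω ∧ Measure.map (φ t) ω ≪ ω)
    (C : ℝ → C(X, ℝ))
    (hCl2 : ∀ t : ℝ, flowCocycle φ ω t =ᵐ[ω] ⇑(C t))
    (σ : C(X, ℝ))
    (hCl3 : HasDerivAt C σ 0)
    (ωp : Measure X) [IsProbabilityMeasure ωp]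
    (T : ℕ → ℝ) (hTpos : ∀ n, 0 < T n) (hTtop : Tendsto T atTop atTop)
    (hNESS : ∀ f : C(X, ℝ),
      Tendsto (fun n => (T n)⁻¹ * ∫ t in (0:ℝ)..(T n), ∫ x, f (φ t x) ∂ω)
        atTop (nhds (∫ x, f x ∂ωp))) :
    0 ≤ ∫ x, σ x ∂ωp :=
  let e := ContinuousMap.linearIsometryBoundedOfCompact X ℝ ℝ
  NESS_entropy_production_nonneg_general
    ⟨hcont.measurable, hzero, hgroup, fun t ↦ (hCl1 t).2⟩ hCl2
    (e.toContinuousLinearEquiv.toContinuousLinearMap.hasFDerivAt.comp_hasDerivAt 0 hCl3)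
    (Eventually.of_forall hTpos) fun f ↦ hNESS f.toContinuousMap
end

section
/- Assume (Cl1), (Cl2) and (Cl3). Then: (1) for every T ∈ ℝ, the Radon–Nikodym derivative satisfies dω_T/dω = exp( ∫_0^T σ(φ^{-s}(·)) ds ) ω-almost everywhere; (2) consequently, for every T > 0, every t ∈ ℝ and every α ∈ ℝ, e^{-T‖σ‖_∞} · ∫_X e^{-α c^t} dω ≤ ∫_X e^{-α c^t} dω_T ≤ e^{T‖σ‖_∞} · ∫_X e^{-α c^t} dω, where ‖σ‖_∞ = sup_{x∈X} |σ(x)|. -/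
open MeasureTheory Filter Set intervalIntegral

/-!
The chain rule for Radon–Nikodym derivatives makes `c` an additive cocycle over the flow, but only
`ω`-a.e. for each fixed pair of times. Continuity of `c^t` upgrades this to an identity at every
point of the support of `ω`, valid for all times at once. Differentiating it along an orbit gives
`d/dt c^t(x) = σ(φ^t x)`, hence `c^T(x) = ∫_0^T σ(φ^s x) ds`; evaluated at `φ^{-T} y`, this is
`log (dω_T/dω)(y)`. Its absolute value is at most `|T| ‖σ‖`, so that
`e^{-|T|‖σ‖} ω ≤ ω_T ≤ e^{|T|‖σ‖} ω` as measures.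
-/

section RadonNikodym

variable {α β : Type*} [MeasurableSpace α] [MeasurableSpace β] {μ ν : Measure α}

lemma rnDeriv_map_ae_eq_rnDeriv_mul {κ : Measure β} {f : α → β} [SigmaFinite μ] [SigmaFinite ν]
    [SigmaFinite κ] (hf : MeasurableEmbedding f) (hνκ : ν.map f ≪ κ) :
    (fun x => (μ.map f).rnDeriv κ (f x)) =ᵐ[ν]
      fun x => μ.rnDeriv ν x * (ν.map f).rnDeriv κ (f x) := by
  have : SigmaFinite (μ.map f) := hf.sigmaFinite_map
  have : SigmaFinite (ν.map f) := hf.sigmaFinite_map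
  have chain := ae_of_ae_map hf.measurable.aemeasurable
    (Measure.rnDeriv_mul_rnDeriv' (μ := μ.map f) hνκ)
  filter_upwards [chain, hf.rnDeriv_map μ ν] with x hchain hmap
  rw [← hchain, Pi.mul_apply, hmap]

lemma smul_le_of_ae_le_rnDeriv {a : ENNReal} (h : ∀ᵐ x ∂ν, a ≤ μ.rnDeriv ν x) : a • ν ≤ μ :=
  calc a • ν = ν.withDensity fun _ => a := (withDensity_const a).symm
    _ ≤ ν.withDensity (μ.rnDeriv ν) := withDensity_mono h
    _ ≤ μ := Measure.withDensity_rnDeriv_le μ ν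

lemma le_smul_of_ae_rnDeriv_le [μ.HaveLebesgueDecomposition ν] {a : ENNReal} (hμν : μ ≪ ν)
    (h : ∀ᵐ x ∂ν, μ.rnDeriv ν x ≤ a) : μ ≤ a • ν :=
  calc μ = ν.withDensity (μ.rnDeriv ν) := (Measure.withDensity_rnDeriv_eq μ ν hμν).symm
    _ ≤ ν.withDensity fun _ => a := withDensity_mono h
    _ = a • ν := withDensity_const a

lemma integral_bounds_of_rnDeriv_ae_eq_exp [μ.HaveLebesgueDecomposition ν] {g f : α → ℝ} {K : ℝ}
    (hμν : μ ≪ ν) (hg : μ.rnDeriv ν =ᵐ[ν] fun x => ENNReal.ofReal (Real.exp (g x)))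
    (hgK : ∀ᵐ x ∂ν, |g x| ≤ K) (hf : 0 ≤ᵐ[ν] f) (hfν : Integrable f ν) :
    Real.exp (-K) * ∫ x, f x ∂ν ≤ ∫ x, f x ∂μ ∧ ∫ x, f x ∂μ ≤ Real.exp K * ∫ x, f x ∂ν := by
  have hlower : ENNReal.ofReal (Real.exp (-K)) • ν ≤ μ := smul_le_of_ae_le_rnDeriv <| by
    filter_upwards [hg, hgK] with x hx hxK
    grw [hx, (abs_le.1 hxK).1]
  have hupper : μ ≤ ENNReal.ofReal (Real.exp K) • ν := le_smul_of_ae_rnDeriv_le hμν <| by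
    filter_upwards [hg, hgK] with x hx hxK
    grw [hx, (abs_le.1 hxK).2]
  have integral_smul (r : ℝ) : ∫ x, f x ∂(ENNReal.ofReal (Real.exp r) • ν) =
      Real.exp r * ∫ x, f x ∂ν := by
    rw [MeasureTheory.integral_smul_measure, ENNReal.toReal_ofReal (Real.exp_pos r).le, smul_eq_mul]
  rw [← integral_smul, ← integral_smul]
  exact ⟨integral_mono_measure hlower (hμν.ae_le hf)
      (hfν.of_measure_le_smul ENNReal.ofReal_ne_top hupper),
    integral_mono_measure hupper (Measure.smul_absolutelyContinuous.ae_le hf)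
      (hfν.smul_measure ENNReal.ofReal_ne_top)⟩

end RadonNikodym

section Flow

variable {X E : Type*} [TopologicalSpace X] [NormedAddCommGroup E] [NormedSpace ℝ E]

lemma eq_integral_flow_of_cocycle [CompleteSpace E] {φ : Flow ℝ X} {σ : X → E} {c : ℝ → X → E}
    {x : X} (hσ : Continuous σ)
    (hderiv : ∀ y, HasDerivAt (fun t => c t y) (σ y) 0)
    (hadd : ∀ t s, c (t + s) x = c t (φ s x) + c s x) (T : ℝ) :
    c T x = ∫ s in (0 : ℝ)..T, σ (φ s x) := by
  have hderiv_orbit (t : ℝ) : HasDerivAt (fun u => c u x) (σ (φ t x)) t := by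
    have hshift : HasDerivAt (fun u => c (u - t) (φ t x) + c t x) (σ (φ t x)) t := by
      have h0 : HasDerivAt (fun u => c u (φ t x)) (σ (φ t x)) (t - t) := by
        simpa only [sub_self] using hderiv (φ t x)
      exact (h0.comp_sub_const t t).add_const (c t x)
    simpa only [← hadd, sub_add_cancel] using hshift
  have hzero : c 0 x = 0 := by simpa [φ.map_zero_apply] using hadd 0 0
  have hint : IntervalIntegrable (fun s => σ (φ s x)) volume 0 T :=
    (hσ.comp (φ.continuous continuous_id continuous_const)).intervalIntegrable 0 T
  rw [integral_eq_sub_of_hasDerivAt (fun t _ => hderiv_orbit t) hint, hzero, sub_zero]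

lemma integral_flow_comp_neg (φ : Flow ℝ X) (σ : X → E) (T : ℝ) (x : X) :
    ∫ s in (0 : ℝ)..T, σ (φ s (φ (-T) x)) = ∫ s in (0 : ℝ)..T, σ (φ (-s) x) := by
  have hreverse (s : ℝ) : φ s (φ (-T) x) = φ (-(T - s)) x := by
    rw [← φ.map_add, neg_sub, sub_eq_add_neg]
  simp only [hreverse, integral_comp_sub_left fun s => σ (φ (-s) x), sub_self, sub_zero]

end Flow

section QuasiInvariant

variable {τ X : Type*} [TopologicalSpace τ] [AddGroup τ] [TopologicalSpace X] [MeasurableSpace X]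
  [BorelSpace X] {φ : Flow τ X} {ω : Measure X}

lemma measurableEmbedding_flow (φ : Flow τ X) (t : τ) : MeasurableEmbedding (φ t) :=
  (φ.toHomeomorph t).measurableEmbedding

instance sigmaFinite_map_flow [SigmaFinite ω] (t : τ) : SigmaFinite (ω.map (φ t)) :=
  (measurableEmbedding_flow φ t).sigmaFinite_map

lemma map_flow_add (φ : Flow τ X) (ω : Measure X) (t s : τ) :
    ω.map (φ (t + s)) = (ω.map (φ s)).map (φ t) := by
  rw [Measure.map_map (measurableEmbedding_flow φ t).measurable
    (measurableEmbedding_flow φ s).measurable]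
  exact congrArg ω.map (funext (φ.map_add t s))

lemma absolutelyContinuous_map_flow (hω : ∀ t, Measure.QuasiMeasurePreserving (φ t) ω ω) (t : τ) :
    ω ≪ ω.map (φ t) := by
  have h := (hω (-t)).absolutelyContinuous.map (hω t).measurable
  rwa [← map_flow_add, add_neg_cancel, φ.map_zero, Measure.map_id] at h

lemma ae_toReal_rnDeriv_map_flow_pos [SigmaFinite ω]
    (hω : ∀ t, Measure.QuasiMeasurePreserving (φ t) ω ω) (t : τ) :
    ∀ᵐ x ∂ω, 0 < ((ω.map (φ t)).rnDeriv ω x).toReal := by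
  have hpos := (absolutelyContinuous_map_flow hω t).ae_le
    (Measure.rnDeriv_pos (hω t).absolutelyContinuous)
  filter_upwards [hpos, Measure.rnDeriv_ne_top (ω.map (φ t)) ω] with x hpos hfin
  exact ENNReal.toReal_pos hpos.ne' hfin

end QuasiInvariant

section Cocycle

variable {X : Type*} [TopologicalSpace X] [MeasurableSpace X] [BorelSpace X] {φ : Flow ℝ X}
  {ω : Measure X} [SigmaFinite ω]

lemma flowCocycle_add_ae_eq (hω : ∀ t, Measure.QuasiMeasurePreserving (φ t) ω ω) (t s : ℝ) :
    flowCocycle φ ω (t + s) =ᵐ[ω] fun x => flowCocycle φ ω t (φ s x) + flowCocycle φ ω s x := by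
  have chain := rnDeriv_map_ae_eq_rnDeriv_mul (μ := ω.map (φ s)) (measurableEmbedding_flow φ t)
    (hω t).absolutelyContinuous
  have hpos_s := (hω s).ae (ae_toReal_rnDeriv_map_flow_pos hω s)
  have hpos_t := (hω s).ae ((hω t).ae (ae_toReal_rnDeriv_map_flow_pos hω t))
  filter_upwards [(hω s).ae chain, hpos_s, hpos_t] with x hchain hs ht
  simp only [flowCocycle, map_flow_add, φ.map_add]
  rw [hchain, ENNReal.toReal_mul, Real.log_mul hs.ne' ht.ne', add_comm]

lemma rnDeriv_map_flow_ae_eq_exp_flowCocycle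
    (hω : ∀ t, Measure.QuasiMeasurePreserving (φ t) ω ω) (t : ℝ) :
    (ω.map (φ t)).rnDeriv ω =ᵐ[ω]
      fun x => ENNReal.ofReal (Real.exp (flowCocycle φ ω t (φ (-t) x))) := by
  filter_upwards [ae_toReal_rnDeriv_map_flow_pos hω t, Measure.rnDeriv_ne_top (ω.map (φ t)) ω]
    with x hpos hfin
  rw [flowCocycle, ← φ.map_add, add_neg_cancel, φ.map_zero_apply, Real.exp_log hpos,
    ENNReal.ofReal_toReal hfin]

variable {c : ℝ → X → ℝ}

lemma cocycle_add_of_mem_support (hω : ∀ t, Measure.QuasiMeasurePreserving (φ t) ω ω)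
    (hc : ∀ t, Continuous (c t)) (hcω : ∀ t, flowCocycle φ ω t =ᵐ[ω] c t) {x : X}
    (hx : x ∈ ω.support) (t s : ℝ) : c (t + s) x = c t (φ s x) + c s x := by
  have hae : ∀ᵐ y ∂ω, c (t + s) y = c t (φ s y) + c s y := by
    filter_upwards [flowCocycle_add_ae_eq hω t s, hcω (t + s), (hω s).ae (hcω t), hcω s]
      with y hadd hts ht hs
    rw [← hts, hadd, ht, hs]
  have hclosed : IsClosed {y | c (t + s) y = c t (φ s y) + c s y} :=
    isClosed_eq (hc _) (((hc t).comp (φ.toHomeomorph s).continuous).add (hc s))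
  exact Measure.support_subset_of_isClosed hclosed hae hx

lemma rnDeriv_map_flow_ae_eq_exp_integral [HereditarilyLindelofSpace X]
    (hω : ∀ t, Measure.QuasiMeasurePreserving (φ t) ω ω)
    (hc : ∀ t, Continuous (c t)) (hcω : ∀ t, flowCocycle φ ω t =ᵐ[ω] c t)
    {σ : X → ℝ} (hσ : Continuous σ) (hderiv : ∀ x, HasDerivAt (fun t => c t x) (σ x) 0) (T : ℝ) :
    (ω.map (φ T)).rnDeriv ω =ᵐ[ω]
      fun x => ENNReal.ofReal (Real.exp (∫ s in (0 : ℝ)..T, σ (φ (-s) x))) := by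
  filter_upwards [rnDeriv_map_flow_ae_eq_exp_flowCocycle hω T, (hω (-T)).ae (hcω T),
    (hω (-T)).ae Measure.support_mem_ae] with x hx hcx hsupp
  rw [hx, hcx, eq_integral_flow_of_cocycle hσ hderiv (cocycle_add_of_mem_support hω hc hcω hsupp),
    integral_flow_comp_neg]

end Cocycle

lemma hasDerivAt_continuousMap_apply {X : Type*} [TopologicalSpace X] [CompactSpace X]
    {C : ℝ → C(X, ℝ)} {C' : C(X, ℝ)} {t : ℝ} (hC : HasDerivAt C C' t) (x : X) :
    HasDerivAt (fun u => C u x) (C' x) t :=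
  (ContinuousMap.evalCLM ℝ x : C(X, ℝ) →L[ℝ] ℝ).hasFDerivAt.comp_hasDerivAt t hC

lemma integrable_exp_neg_mul_of_ae_eq_continuous {X : Type*} [TopologicalSpace X] [CompactSpace X]
    [MeasurableSpace X] [OpensMeasurableSpace X] {ω : Measure X} [IsFiniteMeasure ω]
    {g : X → ℝ} {c : X → ℝ} (hc : Continuous c) (hg : g =ᵐ[ω] c) (α : ℝ) :
    Integrable (fun x => Real.exp (-(α * g x))) ω := by
  have hcont : Continuous fun x => Real.exp (-(α * c x)) := by fun_prop
  refine (hcont.integrable_of_hasCompactSupport (.of_compactSpace _)).congr ?_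
  exact hg.symm.fun_comp fun y => Real.exp (-(α * y))

theorem rnDeriv_formula_and_mgf_bounds_general
    {X : Type*} [TopologicalSpace X] [HereditarilyLindelofSpace X] [MeasurableSpace X]
    [BorelSpace X] (φ : Flow ℝ X) (ω : Measure X) [SigmaFinite ω]
    (hω : ∀ t, Measure.QuasiMeasurePreserving (φ t) ω ω)
    (c : ℝ → X → ℝ) (hc : ∀ t, Continuous (c t)) (hcω : ∀ t, flowCocycle φ ω t =ᵐ[ω] c t)
    (σ : X → ℝ) (hσ : Continuous σ) (hderiv : ∀ x, HasDerivAt (fun t => c t x) (σ x) 0) :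
    (∀ T : ℝ, (ω.map (φ T)).rnDeriv ω =ᵐ[ω]
      fun x => ENNReal.ofReal (Real.exp (∫ s in (0 : ℝ)..T, σ (φ (-s) x)))) ∧
    (∀ K : ℝ, (∀ x, |σ x| ≤ K) → ∀ (T : ℝ) (f : X → ℝ), 0 ≤ᵐ[ω] f → Integrable f ω →
      Real.exp (-(|T| * K)) * ∫ x, f x ∂ω ≤ ∫ x, f x ∂(ω.map (φ T)) ∧
        ∫ x, f x ∂(ω.map (φ T)) ≤ Real.exp (|T| * K) * ∫ x, f x ∂ω) := by
  have hdensity := rnDeriv_map_flow_ae_eq_exp_integral hω hc hcω hσ hderiv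
  refine ⟨hdensity, fun K hK T f hf hfω => ?_⟩
  refine integral_bounds_of_rnDeriv_ae_eq_exp (hω T).absolutelyContinuous (hdensity T)
    (ae_of_all _ fun x => ?_) hf hfω
  simpa only [sub_zero, mul_comm, Real.norm_eq_abs] using
    intervalIntegral.norm_integral_le_of_norm_le_const (f := fun s => σ (φ (-s) x))
      (a := 0) (b := T) fun s _ => hK (φ (-s) x)

/-- Under (Cl1)–(Cl3):
(1) `dω_T/dω = exp (∫_0^T σ(φ^{-s}·) ds)` `ω`-a.e.;
(2) consequently `e^{-T‖σ‖} 𝔉_{ω,t}(α) ≤ 𝔉_{ω_T,t}(α) ≤ e^{T‖σ‖} 𝔉_{ω,t}(α)`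
for `T > 0`, `t ∈ ℝ`, `α ∈ ℝ`, where `𝔉_{ν,t}(α) = ∫ e^{-α c^t} dν`. -/
theorem rnDeriv_formula_and_mgf_bounds
    {X : Type*} [MetricSpace X] [CompactSpace X] [MeasurableSpace X] [BorelSpace X]
    (φ : ℝ → X → X)
    (hcont : Continuous fun p : ℝ × X => φ p.1 p.2)
    (hzero : ∀ x, φ 0 x = x)
    (hgroup : ∀ t s : ℝ, ∀ x, φ (t + s) x = φ t (φ s x))
    (ω : Measure X) [IsProbabilityMeasure ω]
    (hCl1 : ∀ t : ℝ, ω ≪ Measure.map (φ t) ω ∧ Measure.map (φ t) ω ≪ ω)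
    (C : ℝ → C(X, ℝ))
    (hCl2 : ∀ t : ℝ, flowCocycle φ ω t =ᵐ[ω] ⇑(C t))
    (σ : C(X, ℝ))
    (hCl3 : HasDerivAt C σ 0) :
    -- (1) explicit formula for the Radon–Nikodym derivative
    (∀ T : ℝ,
      (Measure.map (φ T) ω).rnDeriv ω =ᵐ[ω]
        fun x => ENNReal.ofReal (Real.exp (∫ s in (0:ℝ)..T, σ (φ (-s) x)))) ∧
    -- (2) two-sided bounds on the moment generating function
    (∀ T : ℝ, 0 < T → ∀ t α : ℝ,
      Real.exp (-(T * ‖σ‖)) * ∫ x, Real.exp (-(α * flowCocycle φ ω t x)) ∂ω ≤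
          ∫ x, Real.exp (-(α * flowCocycle φ ω t x)) ∂(Measure.map (φ T) ω) ∧
        ∫ x, Real.exp (-(α * flowCocycle φ ω t x)) ∂(Measure.map (φ T) ω) ≤
          Real.exp (T * ‖σ‖) * ∫ x, Real.exp (-(α * flowCocycle φ ω t x)) ∂ω) := by
  have h := rnDeriv_formula_and_mgf_bounds_general ⟨φ, hcont, hgroup, hzero⟩ ω
    (fun t => ⟨(hcont.comp (.prodMk_right t)).measurable, (hCl1 t).2⟩) (fun t => C t)
    (fun t => (C t).continuous) hCl2 σ σ.continuous (hasDerivAt_continuousMap_apply hCl3)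
  refine ⟨h.1, fun T hT t α => ?_⟩
  simpa only [abs_of_pos hT] using h.2 ‖σ‖ σ.norm_coe_le_norm T _
    (ae_of_all _ fun x => (Real.exp_pos _).le)
    (integrable_exp_neg_mul_of_ae_eq_continuous (C t).continuous (hCl2 t) α)
end

section
/- In the setting of the previous statement (g(t) = e^{-it𝔯} p(t) + R(t) with |R(t)| ≤ K e^{-γt}, γ > max(0, -Im 𝔯), and f(z) = -i∫_0^∞ e^{izt} g(t) dt extended meromorphically to {Im z > -γ}), assume in addition that R is twice continuously differentiable on [0,∞) and |R'(t)| ≤ K' e^{-γt} and |R''(t)| ≤ K' e^{-γt} for all t ≥ 0 and some K' ≥ 0. Then there exists r > 0 such that for every 0 < μ < γ, sup_{y > -μ} ∫_{|x| > r} |f'(x+iy)| dx < ∞, where f' is the complex derivative of the extension of f. -/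
open MeasureTheory Filter Set
open scoped ENNReal

/-!
On `{Im z > -γ}` one has `F(z) = -i (P(z - 𝔯) + L R(z))`, where `P(w)`, a polynomial in `1/w`
without constant term, is the transform of the polynomial factor, and
`L R(z) = ∫₀^∞ e^{izt} R(t) dt`. Hence `P'(w) = O(|w|⁻²)` away from the origin, while `(L R)'` is
`i` times the transform of `t ↦ t R(t)`; since this function vanishes at `0`, integrating by parts
twice gives `(L R)'(z) = O(|z|⁻²)` on `{Im z ≥ a}` for every `a > -γ`. On horizontal lines `|z|⁻²`
and `|z - 𝔯|⁻²` are integrable over `|Re z| > r > |Re 𝔯|`, uniformly in the height.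
-/

open Complex (I)
open Asymptotics
open scoped Topology

section HalfLine

variable {E : Type*} [NormedAddCommGroup E] {h h' : ℝ → E} {b b' : ℝ}

/-- Exponential decay at rate `b` (growth, if `b < 0`) on `[0, ∞)`. The filter `𝓟 (Ici 0)` makes the
bound hold with one constant on the whole half-line, not only for large `t`. -/
def ExpDecay (h : ℝ → E) (b : ℝ) : Prop :=
  h =O[𝓟 (Ici 0)] fun t => Real.exp (-(b * t))

namespace ExpDecay

theorem of_norm_le {C : ℝ} (hh : ∀ t : ℝ, 0 ≤ t → ‖h t‖ ≤ C * Real.exp (-(b * t))) :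
    ExpDecay h b :=
  IsBigO.of_bound C <| eventually_principal.2 fun t ht => by
    simpa only [Real.norm_eq_abs, Real.abs_exp] using hh t ht

theorem add (hh : ExpDecay h b) (hh' : ExpDecay h' b) : ExpDecay (fun t => h t + h' t) b :=
  IsBigO.add hh hh'

theorem mono (hh : ExpDecay h b) (hb : b' ≤ b) : ExpDecay h b' :=
  IsBigO.trans hh <| IsBigO.of_norm_eventuallyLE <| eventually_principal.2 fun t ht => by
    have ht : 0 ≤ t := ht
    simp only [Real.norm_eq_abs, Real.abs_exp]
    gcongr

end ExpDecay

variable [NormedSpace ℝ E]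

namespace ExpDecay

theorem pow_smul (hh : ExpDecay h b) (hb : b' < b) (k : ℕ) :
    ExpDecay (fun t => t ^ k • h t) b' := by
  have hpow : (fun t : ℝ => t ^ k) =O[𝓟 (Ici 0)] fun t => Real.exp ((b - b') * t) := by
    refine IsBigO.of_bound (k.factorial / (b - b') ^ k) <| eventually_principal.2 fun t ht => ?_
    have ht : 0 ≤ t := ht
    have hb : 0 < b - b' := sub_pos.2 hb
    have hexp := Real.pow_div_factorial_le_exp ((b - b') * t) (mul_nonneg hb.le ht) k
    rw [Real.norm_of_nonneg (by positivity), Real.norm_of_nonneg (by positivity),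
      div_mul_eq_mul_div, le_div_iff₀ (pow_pos hb k), mul_comm, ← mul_pow]
    rwa [div_le_iff₀' (by positivity)] at hexp
  refine (hpow.smul hh).congr_right fun t => ?_
  rw [smul_eq_mul, ← Real.exp_add]
  ring_nf

theorem id_smul (hh : ExpDecay h b) (hb : b' < b) : ExpDecay (fun t => t • h t) b' := by
  simpa only [pow_one] using hh.pow_smul hb 1

theorem pow_smul_const (hb : b < 0) (k : ℕ) (c : E) : ExpDecay (fun t => t ^ k • c) b :=
  pow_smul (of_norm_le (C := ‖c‖) (b := 0) (by simp)) hb k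

end ExpDecay

theorem aestronglyMeasurable_deriv_of_hasDerivWithinAt_Ici [CompleteSpace E]
    (hd : ∀ t : ℝ, 0 ≤ t → HasDerivWithinAt h (h' t) (Ici 0) t) :
    AEStronglyMeasurable h' (volume.restrict (Ioi 0)) :=
  (aestronglyMeasurable_deriv h _).congr <|
    ae_restrict_of_forall_mem measurableSet_Ioi fun t ht =>
      ((hd t (le_of_lt ht)).hasDerivAt (Ici_mem_nhds ht)).deriv

theorem aestronglyMeasurable_of_hasDerivWithinAt_Ici
    (hd : ∀ t : ℝ, 0 ≤ t → HasDerivWithinAt h (h' t) (Ici 0) t) :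
    AEStronglyMeasurable h (volume.restrict (Ioi 0)) :=
  ContinuousOn.aestronglyMeasurable
    (fun t ht => (hd t (le_of_lt ht)).continuousWithinAt.mono Ioi_subset_Ici_self)
    measurableSet_Ioi

end HalfLine

section HorizontalLines

variable {a r : ℝ}

theorem inv_sq_norm_sub_isBigO_inv_one_add_sq_re {w : ℂ} (hr : |w.re| < r) :
    (fun z : ℂ => (‖z - w‖ ^ 2)⁻¹) =O[𝓟 {z | r < |z.re|}] fun z => (1 + z.re ^ 2)⁻¹ := by
  have hr0 : 0 < r := (abs_nonneg _).trans_lt hr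
  have hlin : (fun z : ℂ => z.re) =O[𝓟 {z | r < |z.re|}] fun z => ‖z - w‖ := by
    refine IsBigO.of_bound (r / (r - |w.re|)) <| eventually_principal.2 fun z hz => ?_
    have hz : r < |z.re| := hz
    have hdist : |z.re| - |w.re| ≤ ‖z - w‖ :=
      (abs_sub_abs_le_abs_sub _ _).trans (Complex.abs_re_le_norm (z - w))
    rw [Real.norm_eq_abs, norm_norm, div_mul_eq_mul_div, le_div_iff₀ (sub_pos.2 hr)]
    nlinarith [abs_nonneg w.re]
  have hone : (fun _ : ℂ => (1 : ℝ)) =O[𝓟 {z | r < |z.re|}] fun z => z.re :=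
    IsBigO.of_bound r⁻¹ <| eventually_principal.2 fun z hz => by
      rw [norm_one, Real.norm_eq_abs, inv_mul_eq_div, one_le_div hr0]
      exact le_of_lt hz
  have hsq := ((hone.trans hlin).pow 2).add (hlin.pow 2)
  simp only [one_pow] at hsq
  exact hsq.inv_rev (.of_forall fun z hz => absurd hz (by positivity))

theorem exists_lintegral_horizontal_le {E : Type*} [NormedAddCommGroup E] {f : ℂ → E}
    (hf : f =O[𝓟 {z | a < z.im ∧ r < |z.re|}] fun z => (1 + z.re ^ 2)⁻¹) :
    ∃ C : ℝ, ∀ y : ℝ, a < y →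
      ∫⁻ x in {x : ℝ | r < |x|}, ENNReal.ofReal ‖f (x + y * I)‖ ≤ ENNReal.ofReal C := by
  obtain ⟨C, hC0, hC⟩ := hf.exists_nonneg
  have hmeas : MeasurableSet {x : ℝ | r < |x|} :=
    (isOpen_lt continuous_const continuous_abs).measurableSet
  refine ⟨∫ x : ℝ, C * (1 + x ^ 2)⁻¹, fun y hy => ?_⟩
  rw [ofReal_integral_eq_lintegral_ofReal (integrable_inv_one_add_sq.const_mul C)
    (ae_of_all _ fun x => by positivity)]
  refine (setLIntegral_mono' hmeas fun x hx => ENNReal.ofReal_le_ofReal ?_).trans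
    (setLIntegral_le_lintegral _ _)
  have hbound := isBigOWith_principal.1 hC (x + y * I) (by simpa using ⟨hy, hx⟩)
  rwa [Real.norm_of_nonneg (by positivity), Complex.add_re, Complex.ofReal_re,
    Complex.re_ofReal_mul, Complex.I_re, mul_zero, add_zero] at hbound

end HorizontalLines

section FourierLaplace

variable {E : Type*} [NormedAddCommGroup E] [NormedSpace ℂ E] {h h' R R' R'' : ℝ → E}
  {a b r : ℝ} {w z : ℂ}

/-- The Fourier–Laplace transform `z ↦ ∫₀^∞ e^{izt} h(t) dt` of a function on the half-line; the
function `f` of the resolvent estimates is `-i` times the transform of `g`. -/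
noncomputable def fourierLaplace (h : ℝ → E) (z : ℂ) : E :=
  ∫ t in Ioi (0 : ℝ), Complex.exp (I * z * t) • h t

/-- The polynomial in `1/w` without constant term that is the Fourier–Laplace transform of
`t ↦ ∑ k < N, t ^ k • c k`; translated by `𝔯`, it is the principal part at a pole `𝔯`. -/
noncomputable def principalPart (N : ℕ) (c : ℕ → E) (w : ℂ) : E :=
  ∑ k ∈ Finset.range N, ((I / w) ^ (k + 1) * k.factorial) • c k

namespace ExpDecay

theorem exists_norm_cexp_smul_le (hh : ExpDecay h b) :
    ∃ C, 0 ≤ C ∧ ∀ (z : ℂ) (t : ℝ), 0 ≤ t →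
      ‖Complex.exp (I * z * t) • h t‖ ≤ C * Real.exp (-(b + z.im) * t) := by
  obtain ⟨C, hC, hbound⟩ := IsBigO.exists_nonneg hh
  refine ⟨C, hC, fun z t ht => ?_⟩
  have hnorm : ‖Complex.exp (I * z * t)‖ = Real.exp (-(z.im * t)) := by
    simp [Complex.norm_exp]
  calc ‖Complex.exp (I * z * t) • h t‖
      = Real.exp (-(z.im * t)) * ‖h t‖ := by rw [norm_smul, hnorm]
    _ ≤ Real.exp (-(z.im * t)) * (C * Real.exp (-(b * t))) := by
        gcongr
        simpa only [Real.norm_eq_abs, Real.abs_exp] using isBigOWith_principal.1 hbound t ht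
    _ = C * Real.exp (-(b + z.im) * t) := by
        rw [mul_left_comm, ← Real.exp_add]
        ring_nf

theorem integrableOn_cexp_smul (hh : ExpDecay h b)
    (hm : AEStronglyMeasurable h (volume.restrict (Ioi 0))) (hz : -b < z.im) :
    IntegrableOn (fun t : ℝ => Complex.exp (I * z * t) • h t) (Ioi 0) := by
  obtain ⟨C, -, hC⟩ := hh.exists_norm_cexp_smul_le
  have hexp := integrableOn_exp_mul_Ioi (show -(b + z.im) < 0 by linarith) 0
  exact (hexp.const_mul C).mono' (AEStronglyMeasurable.smul (by fun_prop) hm) <|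
    ae_restrict_of_forall_mem measurableSet_Ioi fun t ht => hC z t (le_of_lt ht)

theorem tendsto_cexp_smul (hh : ExpDecay h b) (hz : -b < z.im) :
    Tendsto (fun t : ℝ => Complex.exp (I * z * t) • h t) atTop (𝓝 0) := by
  obtain ⟨C, -, hC⟩ := hh.exists_norm_cexp_smul_le
  have hexp : Tendsto (fun t : ℝ => C * Real.exp (-(b + z.im) * t)) atTop (𝓝 0) := by
    rw [← mul_zero C]
    exact (Real.tendsto_exp_atBot.comp
      (tendsto_id.const_mul_atTop_of_neg (by linarith))).const_mul C
  refine squeeze_zero_norm' ?_ hexp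
  filter_upwards [eventually_ge_atTop 0] with t ht using hC z t ht

theorem fourierLaplace_isBigO_one (hh : ExpDecay h b) (ha : -b < a) :
    fourierLaplace h =O[𝓟 {z | a ≤ z.im}] fun _ => (1 : ℝ) := by
  obtain ⟨C, hC0, hC⟩ := hh.exists_norm_cexp_smul_le
  refine IsBigO.of_bound (∫ t in Ioi (0 : ℝ), C * Real.exp (-(b + a) * t)) <|
    eventually_principal.2 fun z hz => ?_
  rw [norm_one, mul_one]
  refine norm_integral_le_of_norm_le
    ((integrableOn_exp_mul_Ioi (by linarith) 0).const_mul C) <|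
    ae_restrict_of_forall_mem measurableSet_Ioi fun t ht => (hC z t (le_of_lt ht)).trans ?_
  have ht : 0 < t := ht
  have hz : a ≤ z.im := hz
  gcongr

theorem hasDerivAt_fourierLaplace (hh : ExpDecay h b)
    (hm : AEStronglyMeasurable h (volume.restrict (Ioi 0))) (hz : -b < z.im) :
    HasDerivAt (fourierLaplace h) (I • fourierLaplace (fun t => t • h t) z) z := by
  obtain ⟨a, hba, haz⟩ := exists_between hz
  obtain ⟨b', hb'a, hb'b⟩ := exists_between (neg_lt.1 hba)
  obtain ⟨C, hC0, hC⟩ := (hh.id_smul hb'b).exists_norm_cexp_smul_le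
  have hderiv := hasDerivAt_integral_of_dominated_loc_of_deriv_le (𝕜 := ℂ)
    (μ := volume.restrict (Ioi (0 : ℝ))) (x₀ := z) (s := {w | a < w.im})
    (F := fun w t => Complex.exp (I * w * t) • h t)
    (F' := fun w t => I • Complex.exp (I * w * t) • t • h t)
    (bound := fun t => C * Real.exp (-(b' + a) * t))
    ((isOpen_lt continuous_const Complex.continuous_im).mem_nhds haz)
    (.of_forall fun w => AEStronglyMeasurable.smul (by fun_prop) hm)
    (hh.integrableOn_cexp_smul hm hz)
    ((AEStronglyMeasurable.smul (by fun_prop)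
      (aestronglyMeasurable_id.smul hm)).const_smul I)
    (ae_restrict_of_forall_mem measurableSet_Ioi fun t ht w hw => ?_)
    ((integrableOn_exp_mul_Ioi (by linarith) 0).const_mul C)
    (ae_of_all _ fun t w _ => ?_)
  · simpa only [integral_smul] using! hderiv.2
  · have ht : 0 < t := ht
    have hw : a < w.im := hw
    rw [norm_smul, Complex.norm_I, one_mul]
    refine (hC w t ht.le).trans ?_
    gcongr
  · have hexp : HasDerivAt (fun w : ℂ => Complex.exp (I * w * t))
        (Complex.exp (I * w * t) * (I * 1 * t)) w :=
      (((hasDerivAt_id w).const_mul I).mul_const (t : ℂ)).cexp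
    convert! hexp.smul_const (h t) using 1
    simp only [← Complex.coe_smul, smul_smul]
    ring_nf

end ExpDecay

theorem smul_fourierLaplace_eq_of_hasDerivWithinAt [CompleteSpace E]
    (hd : ∀ t : ℝ, 0 ≤ t → HasDerivWithinAt h (h' t) (Ici 0) t)
    (hh : ExpDecay h b) (hh' : ExpDecay h' b) (hz : -b < z.im) :
    (I * z) • fourierLaplace h z = -h 0 - fourierLaplace h' z := by
  have hint := hh.integrableOn_cexp_smul (aestronglyMeasurable_of_hasDerivWithinAt_Ici hd) hz
  have hint' :=
    hh'.integrableOn_cexp_smul (aestronglyMeasurable_deriv_of_hasDerivWithinAt_Ici hd) hz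
  have hcont : ContinuousWithinAt (fun t : ℝ => Complex.exp (I * z * t) • h t) (Ici 0) 0 :=
    ContinuousWithinAt.smul (by fun_prop) (hd 0 le_rfl).continuousWithinAt
  have hderiv (t : ℝ) (ht : t ∈ Ioi 0) :
      HasDerivAt (fun t : ℝ => Complex.exp (I * z * t) • h t)
        (Complex.exp (I * z * t) • h' t + (I * z) • Complex.exp (I * z * t) • h t) t := by
    have hexp : HasDerivAt (fun t : ℝ => Complex.exp (I * z * t))
        (Complex.exp (I * z * t) * (I * z * 1)) t :=
      (Complex.ofRealCLM.hasDerivAt.const_mul (I * z)).cexp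
    convert! hexp.smul ((hd t (le_of_lt ht)).hasDerivAt (Ici_mem_nhds ht)) using 2
    rw [smul_smul, mul_one, mul_comm]
  have hFTC := integral_Ioi_of_hasDerivAt_of_tendsto hcont hderiv
    (hint'.add (hint.smul (I * z))) (hh.tendsto_cexp_smul hz)
  replace hFTC := (integral_add hint' (hint.smul (I * z))).symm.trans hFTC
  simp only [Pi.smul_apply, integral_smul] at hFTC
  rw [eq_sub_iff_add_eq']
  simpa [fourierLaplace] using hFTC

theorem sq_smul_fourierLaplace_id_smul_eq [CompleteSpace E]
    (hR' : ∀ t : ℝ, 0 ≤ t → HasDerivWithinAt R (R' t) (Ici 0) t)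
    (hR'' : ∀ t : ℝ, 0 ≤ t → HasDerivWithinAt R' (R'' t) (Ici 0) t)
    (hRdecay : ExpDecay R b) (hR'decay : ExpDecay R' b) (hR''decay : ExpDecay R'' b)
    (hz : -b < z.im) :
    (I * z) ^ 2 • fourierLaplace (fun t => t • R t) z =
      R 0 + fourierLaplace (fun t => R' t + (t • R'' t + R' t)) z := by
  obtain ⟨b', hzb', hb'⟩ := exists_between (neg_lt.1 hz)
  have hd₁ (t : ℝ) (ht : 0 ≤ t) :
      HasDerivWithinAt (fun t => t • R t) (t • R' t + R t) (Ici 0) t := by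
    simpa only [one_smul] using! (hasDerivWithinAt_id t _).smul (hR' t ht)
  have hd₂ (t : ℝ) (ht : 0 ≤ t) : HasDerivWithinAt (fun t => t • R' t + R t)
      (R' t + (t • R'' t + R' t)) (Ici 0) t := by
    rw [add_comm]
    simpa only [one_smul] using! ((hasDerivWithinAt_id t _).smul (hR'' t ht)).add (hR' t ht)
  have hdecay₁ := (hR'decay.id_smul hb').add (hRdecay.mono hb'.le)
  have hdecay₂ := (hR'decay.mono hb'.le).add ((hR''decay.id_smul hb').add (hR'decay.mono hb'.le))
  rw [pow_two, mul_smul, smul_fourierLaplace_eq_of_hasDerivWithinAt hd₁ (hRdecay.id_smul hb')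
    hdecay₁ (neg_lt.1 hzb'), zero_smul, neg_zero, zero_sub, smul_neg,
    smul_fourierLaplace_eq_of_hasDerivWithinAt hd₂ hdecay₁ hdecay₂ (neg_lt.1 hzb')]
  simp only [zero_smul, zero_add]
  abel

theorem deriv_fourierLaplace_isBigO [CompleteSpace E]
    (hR' : ∀ t : ℝ, 0 ≤ t → HasDerivWithinAt R (R' t) (Ici 0) t)
    (hR'' : ∀ t : ℝ, 0 ≤ t → HasDerivWithinAt R' (R'' t) (Ici 0) t)
    (hRdecay : ExpDecay R b) (hR'decay : ExpDecay R' b) (hR''decay : ExpDecay R'' b)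
    (ha : -b < a) :
    deriv (fourierLaplace R) =O[𝓟 {z | a ≤ z.im ∧ z ≠ 0}] fun z => (‖z‖ ^ 2)⁻¹ := by
  obtain ⟨b', hab', hb'⟩ := exists_between (neg_lt.1 ha)
  have hdecay := (hR'decay.mono hb'.le).add ((hR''decay.id_smul hb').add (hR'decay.mono hb'.le))
  obtain ⟨C, hC⟩ := ((isBigO_const_const (R 0) one_ne_zero _).add
    (hdecay.fourierLaplace_isBigO_one (neg_lt.1 hab'))).bound
  refine IsBigO.of_bound C <| eventually_principal.2 fun z ⟨hza, hz0⟩ => ?_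
  have hz : -b < z.im := ha.trans_le hza
  have hderiv := hRdecay.hasDerivAt_fourierLaplace
    (aestronglyMeasurable_of_hasDerivWithinAt_Ici hR') hz
  have hbound := eventually_principal.1 hC z hza
  rw [← sq_smul_fourierLaplace_id_smul_eq hR' hR'' hRdecay hR'decay hR''decay hz, norm_smul,
    norm_pow, norm_mul, Complex.norm_I, one_mul, norm_one, mul_one] at hbound
  rw [hderiv.deriv, norm_smul, Complex.norm_I, one_mul, norm_inv, norm_pow, norm_norm,
    ← div_eq_mul_inv, le_div_iff₀' (by positivity)]
  exact hbound

theorem fourierLaplace_pow_smul_const [CompleteSpace E] (hw : 0 < w.im) (k : ℕ) (c : E) :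
    fourierLaplace (fun t => t ^ k • c) w = ((I / w) ^ (k + 1) * k.factorial) • c := by
  have hw0 : w ≠ 0 := by
    rintro rfl
    exact hw.false
  have hII : I / w * (I * w) = -1 := by
    rw [div_mul_eq_mul_div, div_eq_iff hw0, ← mul_assoc, Complex.I_mul_I]
  induction k generalizing c with
  | zero =>
    have hexp : ∫ t in Ioi (0 : ℝ), Complex.exp (I * w * t) = I / w := by
      rw [integral_exp_mul_complex_Ioi (by simpa using hw), Complex.ofReal_zero, mul_zero,
        Complex.exp_zero, div_eq_iff (mul_ne_zero Complex.I_ne_zero hw0), hII]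
    simp [fourierLaplace, integral_smul_const, hexp]
  | succ k ih =>
    obtain ⟨b, hwb, hb⟩ := exists_between (neg_lt_zero.2 hw)
    have hd (t : ℝ) (_ : 0 ≤ t) : HasDerivWithinAt (fun t : ℝ => t ^ (k + 1) • c)
        (t ^ k • ((k + 1 : ℕ) : ℂ) • c) (Ici 0) t := by
      convert! ((hasDerivAt_pow (k + 1) t).smul_const c).hasDerivWithinAt using 1
      simp only [← Complex.coe_smul, smul_smul]
      push_cast
      ring_nf
    have hparts := smul_fourierLaplace_eq_of_hasDerivWithinAt hd
      (ExpDecay.pow_smul_const hb _ c) (ExpDecay.pow_smul_const hb k _) (neg_lt.1 hwb)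
    rw [ih, zero_pow k.succ_ne_zero, zero_smul, neg_zero, zero_sub, ← neg_inj] at hparts
    calc fourierLaplace (fun t => t ^ (k + 1) • c) w
        = (I / w) • -((I * w) • fourierLaplace (fun t => t ^ (k + 1) • c) w) := by
          rw [smul_neg, smul_smul, hII, neg_one_smul, neg_neg]
      _ = ((I / w) ^ (k + 1 + 1) * (k + 1).factorial) • c := by
          rw [hparts, neg_neg, smul_smul, smul_smul, Nat.factorial_succ]
          push_cast
          ring_nf

theorem fourierLaplace_sum_pow_smul [CompleteSpace E] (N : ℕ) (c : ℕ → E) (hw : 0 < w.im) :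
    fourierLaplace (fun t => ∑ k ∈ Finset.range N, t ^ k • c k) w = principalPart N c w := by
  obtain ⟨b, hwb, hb⟩ := exists_between (neg_lt_zero.2 hw)
  simp only [fourierLaplace, Finset.smul_sum]
  rw [integral_finsetSum _ fun k _ => (ExpDecay.pow_smul_const hb k (c k)).integrableOn_cexp_smul
    (by fun_prop) (neg_lt.1 hwb)]
  exact Finset.sum_congr rfl fun k _ => fourierLaplace_pow_smul_const hw k (c k)

theorem hasDerivAt_principalPart (N : ℕ) (c : ℕ → E) (hw : w ≠ 0) :
    HasDerivAt (principalPart N c)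
      (∑ k ∈ Finset.range N, (I * (I / w) ^ (k + 2) * (k + 1).factorial) • c k) w := by
  have hdiv : HasDerivAt (fun w : ℂ => I / w) (I * (I / w) ^ 2) w := by
    convert! (hasDerivAt_inv hw).const_mul I using 1
    rw [div_pow, Complex.I_sq]
    ring
  refine HasDerivAt.fun_sum fun k _ => ?_
  convert! ((hdiv.pow (k + 1)).mul_const (k.factorial : ℂ)).smul_const (c k) using 2
  rw [Nat.factorial_succ]
  push_cast
  ring

theorem deriv_principalPart_isBigO (N : ℕ) (c : ℕ → E) {δ : ℝ} (hδ : 0 < δ) :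
    deriv (principalPart N c) =O[𝓟 {w | δ ≤ ‖w‖}] fun w => (‖w‖ ^ 2)⁻¹ := by
  have hinv : (fun w : ℂ => I / w) =O[𝓟 {w | δ ≤ ‖w‖}] fun _ => (1 : ℝ) :=
    IsBigO.of_bound δ⁻¹ <| eventually_principal.2 fun w hw => by
      simpa using inv_anti₀ hδ hw
  have hterm (k : ℕ) : (fun w : ℂ => (I * (I / w) ^ (k + 2) * (k + 1).factorial) • c k)
      =O[𝓟 {w | δ ≤ ‖w‖}] fun w => (‖w‖ ^ 2)⁻¹ := by
    have hsq : (fun w : ℂ => (I / w) ^ 2) =O[𝓟 {w | δ ≤ ‖w‖}] fun w => (‖w‖ ^ 2)⁻¹ :=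
      isBigO_of_le _ fun w => by simp
    have hpow := ((hinv.pow k).mul hsq).const_mul_left (I * (k + 1).factorial)
    refine (hpow.smul (isBigO_const_const (c k) one_ne_zero _)).congr (fun w => ?_) fun w => ?_
    · ring_nf
    · simp
  refine (IsBigO.fun_sum fun k (_ : k ∈ Finset.range N) => hterm k).congr' ?_ .rfl
  exact eventually_principal.2 fun w hw =>
    (hasDerivAt_principalPart N c (norm_pos_iff.1 (hδ.trans_le hw))).deriv.symm

theorem fourierLaplace_eq_principalPart_add [CompleteSpace E] {𝔯 : ℂ} {N : ℕ} {c : ℕ → E}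
    {g : ℝ → E} (hR : ExpDecay R b) (hm : AEStronglyMeasurable R (volume.restrict (Ioi 0)))
    (hg : ∀ t : ℝ, 0 < t →
      g t = Complex.exp (-(I * t * 𝔯)) • ∑ k ∈ Finset.range N, t ^ k • c k + R t)
    (hz𝔯 : 𝔯.im < z.im) (hz : -b < z.im) :
    fourierLaplace g z = principalPart N c (z - 𝔯) + fourierLaplace R z := by
  have him : 0 < (z - 𝔯).im := by simpa using hz𝔯
  obtain ⟨b₀, hzb₀, hb₀⟩ := exists_between (neg_lt_zero.2 him)
  have hdecay : ExpDecay (fun t => ∑ k ∈ Finset.range N, t ^ k • c k) b₀ :=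
    IsBigO.fun_sum fun k _ => ExpDecay.pow_smul_const hb₀ k (c k)
  rw [← fourierLaplace_sum_pow_smul N c him]
  simp only [fourierLaplace]
  rw [← integral_add (hdecay.integrableOn_cexp_smul (by fun_prop) (neg_lt.1 hzb₀))
    (hR.integrableOn_cexp_smul hm hz)]
  refine setIntegral_congr_fun measurableSet_Ioi fun t ht => ?_
  simp only [hg t ht, smul_add, smul_smul, ← Complex.exp_add]
  ring_nf

-- Each half-plane on one side of the line `Re z = a` is cut out by the sign of a product, so one
-- convex set serves both sides.
theorem eqOn_of_eqOn_im_gt [CompleteSpace E] {F G : ℂ → E} {c : ℝ}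
    (hF : DifferentiableOn ℂ F {z | b < z.im ∧ z.re ≠ a})
    (hG : DifferentiableOn ℂ G {z | b < z.im ∧ z.re ≠ a}) (hFG : EqOn F G {z | c < z.im}) :
    EqOn F G {z | b < z.im ∧ z.re ≠ a} := by
  rintro z ⟨hzb, hza⟩
  set S : Set ℂ := {w | b < w.im} ∩ {w | (z.re - a) * a < (z.re - a) * w.re}
  have hS : IsOpen S := (isOpen_lt continuous_const Complex.continuous_im).inter
    (isOpen_lt continuous_const (continuous_const.mul Complex.continuous_re))
  have hconvex : Convex ℝ S := (convex_halfSpace_im_gt b).inter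
    (convex_halfSpace_gt ((z.re - a) • Complex.reLm).isLinear _)
  have hsubset : S ⊆ {z | b < z.im ∧ z.re ≠ a} := fun w hw =>
    ⟨hw.1, fun hwa => (hwa ▸ hw.2 : (z.re - a) * w.re < _).false⟩
  have hside : (z.re - a) * a < (z.re - a) * z.re := by
    nlinarith [sq_pos_of_ne_zero (sub_ne_zero.2 hza)]
  have hmem : (⟨z.re, max b c + 1⟩ : ℂ) ∈ S :=
    ⟨(le_max_left b c).trans_lt (lt_add_one _), hside⟩
  refine ((hF.mono hsubset).analyticOnNhd hS).eqOn_of_preconnected_of_eventuallyEq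
    ((hG.mono hsubset).analyticOnNhd hS) hconvex.isPreconnected hmem ?_ ⟨hzb, hside⟩
  exact hFG.eventuallyEq_of_mem <| (isOpen_lt continuous_const Complex.continuous_im).mem_nhds <|
    (le_max_right b c).trans_lt (lt_add_one _)

theorem hasDerivAt_of_eq_smul_fourierLaplace [CompleteSpace E] {𝔯 : ℂ} {N : ℕ} {c : ℕ → E}
    {g : ℝ → E} {F : ℂ → E} (hR : ExpDecay R b)
    (hm : AEStronglyMeasurable R (volume.restrict (Ioi 0)))
    (hg : ∀ t : ℝ, 0 < t →
      g t = Complex.exp (-(I * t * 𝔯)) • ∑ k ∈ Finset.range N, t ^ k • c k + R t)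
    (hF : ∀ z : ℂ, 𝔯.im < z.im → -b < z.im → F z = -I • fourierLaplace g z)
    (hFdiff : DifferentiableOn ℂ F {z | -b < z.im ∧ z ≠ 𝔯})
    (hz : -b < z.im) (hz𝔯 : z.re ≠ 𝔯.re) :
    HasDerivAt F (-I • (deriv (principalPart N c) (z - 𝔯) + deriv (fourierLaplace R) z)) z := by
  set S : Set ℂ := {z | -b < z.im ∧ z.re ≠ 𝔯.re}
  set G : ℂ → E := fun z => -I • (principalPart N c (z - 𝔯) + fourierLaplace R z)
  have hne {z : ℂ} (hz : z.re ≠ 𝔯.re) : z ≠ 𝔯 := fun h => hz (h ▸ rfl)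
  have hG (z : ℂ) (hz : z ∈ S) : HasDerivAt G
      (-I • (deriv (principalPart N c) (z - 𝔯) + deriv (fourierLaplace R) z)) z := by
    have hP := hasDerivAt_principalPart N c (sub_ne_zero.2 (hne hz.2))
    have hL := hR.hasDerivAt_fourierLaplace hm hz.1
    exact ((hP.differentiableAt.hasDerivAt.comp_sub_const z 𝔯).add
      hL.differentiableAt.hasDerivAt).const_smul (-I)
  have hFG : EqOn F G S := eqOn_of_eqOn_im_gt (c := max 𝔯.im (-b))
    (hFdiff.mono fun z hz => ⟨hz.1, hne hz.2⟩)
    (fun z hz => (hG z hz).differentiableAt.differentiableWithinAt) fun z hz => by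
      obtain ⟨hz𝔯, hzb⟩ : 𝔯.im < z.im ∧ -b < z.im := max_lt_iff.1 hz
      rw [hF z hz𝔯 hzb, fourierLaplace_eq_principalPart_add hR hm hg hz𝔯 hzb]
  have hS : IsOpen S := (isOpen_lt continuous_const Complex.continuous_im).inter
    (isOpen_ne_fun Complex.continuous_re continuous_const)
  have hzS : z ∈ S := ⟨hz, hz𝔯⟩
  exact (hG z hzS).congr_of_eventuallyEq (hFG.eventuallyEq_of_mem (hS.mem_nhds hzS))

theorem converse_resonance_derivative_estimate_general [CompleteSpace E]
    (𝔯 : ℂ) (N : ℕ) (c : ℕ → E) {γ : ℝ}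
    (hR' : ∀ t : ℝ, 0 ≤ t → HasDerivWithinAt R (R' t) (Ici 0) t)
    (hR'' : ∀ t : ℝ, 0 ≤ t → HasDerivWithinAt R' (R'' t) (Ici 0) t)
    (hRdecay : ExpDecay R γ) (hR'decay : ExpDecay R' γ) (hR''decay : ExpDecay R'' γ)
    {g : ℝ → E}
    (hg : ∀ t : ℝ, 0 < t →
      g t = Complex.exp (-(I * t * 𝔯)) • ∑ k ∈ Finset.range N, t ^ k • c k + R t)
    {F : ℂ → E}
    (hF : ∀ z : ℂ, 𝔯.im < z.im → -γ < z.im → F z = -I • fourierLaplace g z)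
    (hFdiff : DifferentiableOn ℂ F {z | -γ < z.im ∧ z ≠ 𝔯})
    (hr : |𝔯.re| < r) {μ : ℝ} (hμ : μ < γ) :
    ∃ C : ℝ, ∀ y : ℝ, -μ < y →
      ∫⁻ x in {x : ℝ | r < |x|}, ENNReal.ofReal ‖deriv F (x + y * I)‖ ≤ ENNReal.ofReal C := by
  have hr0 : 0 < r := (abs_nonneg _).trans_lt hr
  have hderiv : EqOn
      (fun z => -I • (deriv (principalPart N c) (z - 𝔯) + deriv (fourierLaplace R) z))
      (deriv F) {z | -μ < z.im ∧ r < |z.re|} := fun z hz => by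
    have hz𝔯 : z.re ≠ 𝔯.re := fun h => (h ▸ hz.2).not_gt hr
    exact (hasDerivAt_of_eq_smul_fourierLaplace hRdecay
      (aestronglyMeasurable_of_hasDerivWithinAt_Ici hR') hg hF hFdiff
      ((neg_lt_neg hμ).trans hz.1) hz𝔯).deriv.symm
  have hfar : Tendsto (fun z : ℂ => z - 𝔯) (𝓟 {z | r < |z.re|}) (𝓟 {w | r - |𝔯.re| ≤ ‖w‖}) :=
    tendsto_principal_principal.2 fun z hz =>
      (sub_le_sub_right (le_of_lt hz) _).trans <|
        (abs_sub_abs_le_abs_sub _ _).trans (Complex.abs_re_le_norm (z - 𝔯))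
  have hP : (fun z => deriv (principalPart N c) (z - 𝔯)) =O[𝓟 {z | -μ < z.im ∧ r < |z.re|}]
      fun z => (1 + z.re ^ 2)⁻¹ :=
    (((deriv_principalPart_isBigO N c (sub_pos.2 hr)).comp_tendsto hfar).trans
      (inv_sq_norm_sub_isBigO_inv_one_add_sq_re hr)).mono (principal_mono.2 fun z hz => hz.2)
  have hL : deriv (fourierLaplace R) =O[𝓟 {z | -μ < z.im ∧ r < |z.re|}]
      fun z => (1 + z.re ^ 2)⁻¹ := by
    have hinv := inv_sq_norm_sub_isBigO_inv_one_add_sq_re (w := 0) (r := r) (by simpa using hr0)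
    simp only [sub_zero] at hinv
    refine ((deriv_fourierLaplace_isBigO hR' hR'' hRdecay hR'decay hR''decay
      (neg_lt_neg hμ)).mono (principal_mono.2 fun z hz => ⟨le_of_lt hz.1, ?_⟩)).trans
      (hinv.mono (principal_mono.2 fun z hz => hz.2))
    rintro rfl
    simpa [hr0.not_gt] using hz.2
  exact exists_lintegral_horizontal_le
    (((hP.add hL).const_smul_left (-I)).congr' (eventually_principal.2 hderiv) .rfl)

end FourierLaplace

/-- Case `j = 1` of the resolvent estimates of Proposition 5.2: in the setting of the
converse resonance statement (`g(t) = e^{-it𝔯} p(t) + R(t)` with `‖R(t)‖ ≤ K e^{-γt}`,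
`γ > max(0, -Im 𝔯)`, and `F` the meromorphic extension of the Laplace transform
`f(z) = -i∫_0^∞ e^{izt} g(t) dt` to `{Im z > -γ} \ {𝔯}`), if moreover `R` is twice
continuously differentiable on `[0,∞)` with `‖R'(t)‖, ‖R''(t)‖ ≤ K' e^{-γt}`, then the
complex derivative of `F` satisfies a uniform `L¹` bound on horizontal lines in the
region `|x| > r`. -/
theorem converse_resonance_derivative_estimate
    (𝔯 : ℂ) (N : ℕ) (hN : 1 ≤ N)
    (p : Polynomial ℂ) (hp : p.degree = ((N - 1 : ℕ) : WithBot ℕ))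
    (γ : ℝ) (hγ : max 0 (-𝔯.im) < γ)
    (R R' R'' : ℝ → ℂ)
    (hR' : ∀ t : ℝ, 0 ≤ t → HasDerivWithinAt R (R' t) (Set.Ici 0) t)
    (hR'' : ∀ t : ℝ, 0 ≤ t → HasDerivWithinAt R' (R'' t) (Set.Ici 0) t)
    (hR''cont : ContinuousOn R'' (Set.Ici 0))
    (K K' : ℝ) (hK : 0 ≤ K) (hK' : 0 ≤ K')
    (hRbound : ∀ t : ℝ, 0 ≤ t → ‖R t‖ ≤ K * Real.exp (-(γ * t)))
    (hR'bound : ∀ t : ℝ, 0 ≤ t → ‖R' t‖ ≤ K' * Real.exp (-(γ * t)))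
    (hR''bound : ∀ t : ℝ, 0 ≤ t → ‖R'' t‖ ≤ K' * Real.exp (-(γ * t)))
    (g : ℝ → ℂ)
    (hg : ∀ t : ℝ, g t = Complex.exp (-(Complex.I * (t : ℂ) * 𝔯)) * p.eval (t : ℂ) + R t)
    (F : ℂ → ℂ)
    (hFeq : ∀ z : ℂ, 𝔯.im < z.im →
      F z = -Complex.I * ∫ t in Set.Ioi (0:ℝ), Complex.exp (Complex.I * z * t) * g t)
    (hFdiff : DifferentiableOn ℂ F {z : ℂ | -γ < z.im ∧ z ≠ 𝔯}) :
    ∃ r : ℝ, 0 < r ∧ ∀ μ : ℝ, 0 < μ → μ < γ → ∃ Cb : ℝ,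
      ∀ y : ℝ, -μ < y →
        ∫⁻ x in {x : ℝ | r < |x|},
          ENNReal.ofReal ‖deriv F (x + y * Complex.I)‖ ≤ ENNReal.ofReal Cb := by
  refine ⟨|𝔯.re| + 1, by positivity, fun μ _ hμ => ?_⟩
  exact converse_resonance_derivative_estimate_general 𝔯 (p.natDegree + 1) p.coeff hR' hR''
    (.of_norm_le hRbound) (.of_norm_le hR'bound) (.of_norm_le hR''bound)
    (fun t _ => by simp [hg, Polynomial.eval_eq_sum_range, mul_comm])
    (fun z hz _ => hFeq z hz) hFdiff (lt_add_one _) hμ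
end
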